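/- The bihomogeneous polynomial F_{Z(H₃)} ∈ ℂ[a,b,c,x,y,z] is nonzero and has multiplicity at least 5 at the general point: for every multi-index (α₁,α₂,α₃) of non-negative integers with α₁+α₂+α₃ ≤ 4, the partial derivative ∂^{α₁+α₂+α₃}F_{Z(H₃)}/∂x^{α₁}∂y^{α₂}∂z^{α₃}, evaluated at (x,y,z) = (a,b,c), is the zero polynomial in ℂ[a,b,c]. (Thus for each (a:b:c) the sextic F_{Z(H₃)}((a:b:c),(x:y:z)) is the unexpected curve of degree 6 with a point of multiplicity 5 at (a:b:c).) -/

import Mathlib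

open MvPolynomial

/-- `ℂ[a,b,c]`, the ring of coefficients (polynomials in the coordinates of the general
point `P = (a:b:c)`). -/
noncomputable abbrev Qabc : Type := MvPolynomial (Fin 3) ℂ

/-- `ℂ[a,b,c][x,y,z]`, the ring in which the bihomogeneous form `F_{Z(H₃)}` lives. -/
noncomputable abbrev Sxyz : Type := MvPolynomial (Fin 3) Qabc

/-- The six linear forms `L₁, …, L₆` of the `H₃` configuration, in the variables `x,y,z`. -/
noncomputable def H3L (u : ℂ) : Fin 6 → Sxyz :=
  ![X 1 - C (C (u - 1)) * X 2, X 1 + C (C (u - 1)) * X 2,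
    X 0 - C (C u) * X 2, X 0 + C (C u) * X 2,
    X 0 - C (C (u - 1)) * X 1, X 0 + C (C (u - 1)) * X 1]

/-- The six quintics `fᵢ = ∏_{j ≠ i} Lⱼ`. -/
noncomputable def H3f (u : ℂ) (i : Fin 6) : Sxyz :=
  ∏ j ∈ Finset.univ.erase i, H3L u j

/-- The Galois-conjugate lines `M₁ = y + uz`, `M₂ = y − uz`, `M₃ = x − (1−u)z`,
`M₄ = x + (1−u)z`, `M₅ = x + uy`, `M₆ = x − uy`. -/
noncomputable def H3M (u : ℂ) : Fin 6 → Sxyz :=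
  ![X 1 + C (C u) * X 2, X 1 - C (C u) * X 2,
    X 0 - C (C (1 - u)) * X 2, X 0 + C (C (1 - u)) * X 2,
    X 0 + C (C u) * X 1, X 0 - C (C u) * X 1]

/-- The twelve quintics `q₁, …, q₁₂` in `ℂ[a,b,c]` (with `a = X 0`, `b = X 1`, `c = X 2`). -/
noncomputable def H3q (u : ℂ) : Fin 12 → Qabc :=
  ![X 0 * (X 1 - C (u-1) * X 2)^4, (X 1 + C u * X 2) * (X 1 - C (u-1) * X 2)^4,
    X 0 * (X 1 + C (u-1) * X 2)^4, (X 1 - C u * X 2) * (X 1 + C (u-1) * X 2)^4,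
    X 1 * (X 0 - C u * X 2)^4, (X 0 + C (u-1) * X 2) * (X 0 - C u * X 2)^4,
    X 1 * (X 0 + C u * X 2)^4, (X 0 - C (u-1) * X 2) * (X 0 + C u * X 2)^4,
    X 2 * (X 0 - C (u-1) * X 1)^4, (X 0 + C u * X 1) * (X 0 - C (u-1) * X 1)^4,
    X 2 * (X 0 + C (u-1) * X 1)^4, (X 0 - C u * X 1) * (X 0 + C (u-1) * X 1)^4]

/-- The bihomogeneous polynomial `F_{Z(H₃)} ∈ ℂ[a,b,c][x,y,z]` cutting out the unexpected
sextic with a quintuple point at the general point `(a:b:c)`. -/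
noncomputable def H3F (u : ℂ) : Sxyz :=
  C (C ((1:ℂ)/2)) *
    ( C (C (3*u+1)) * (H3M u 0 * H3f u 0 * C (H3q u 0) - X 0 * H3f u 0 * C (H3q u 1)
        - H3M u 1 * H3f u 1 * C (H3q u 2) + X 0 * H3f u 1 * C (H3q u 3))
    + C (C (1-2*u)) * (H3M u 2 * H3f u 2 * C (H3q u 4) - X 1 * H3f u 2 * C (H3q u 5)
        - H3M u 3 * H3f u 3 * C (H3q u 6) + X 1 * H3f u 3 * C (H3q u 7))
    + C (C (3*u+1)) * (H3M u 4 * H3f u 4 * C (H3q u 8) - X 2 * H3f u 4 * C (H3q u 9)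
        - H3M u 5 * H3f u 5 * C (H3q u 10) + X 2 * H3f u 5 * C (H3q u 11)) )

/-!
Write `P = (a, b, c)`, `Q = (x, y, z)`, and let `ℓᵢ` be the linear form `Lᵢ`. With `A` the
coordinate absent from `Lᵢ`, the brackets `Mᵢ(Q) A(P) - A(Q) Mᵢ(P)` occurring in `F` are multiples
of `ℓᵢ(Q × P)`, so `F` is half of
`∑ᵢ wᵢ ℓᵢ(Q × P) ℓᵢ(P)⁴ ∏_{j ≠ i} ℓⱼ(Q)` for suitable weights `wᵢ`. As `ℓᵢ(Q)` divides
`ℓᵢ(P)⁴ - ℓᵢ(P - Q)⁴`, replacing `ℓᵢ(P)⁴` by `ℓᵢ(P - Q)⁴` changes the sum by a multiple of the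
quartic moments `∑ᵢ wᵢ ℓᵢ(Q × P) ℓᵢ(P)ᵏ ℓᵢ(P - Q)³⁻ᵏ`. The `ℓᵢ` are the six fivefold axes of an
icosahedron, whose quartic moment is a multiple of the symmetrized square of the inner product;
since `Q × P` is orthogonal to `P` and to `P - Q`, these moments vanish. Hence `F` lies in the
fifth power of the ideal of polynomials vanishing at `Q = P`, and each derivative lowers the
exponent by at most one. That `F` is nonzero is seen at `P = (0, 0, 1)`, `Q = (1, 1, 0)`.
-/

theorem derivation_mem_pow {A R : Type*} [CommSemiring A] [CommSemiring R] [Algebra A R]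
    (D : Derivation A R R) {I : Ideal R} {n : ℕ} {f : R} (hf : f ∈ I ^ (n + 1)) :
    D f ∈ I ^ n := by
  induction n generalizing f with
  | zero => simp
  | succ n ih =>
    rw [pow_succ] at hf
    induction hf using Submodule.mul_induction_on' with
    | mem_mul_mem g hg h hh =>
      rw [D.leibniz, smul_eq_mul, smul_eq_mul]
      refine add_mem (Ideal.mul_mem_right _ _ hg) ?_
      rw [pow_succ']
      exact Ideal.mul_mem_mul hh (ih hg)
    | add g _ h _ hg hh => rw [map_add]; exact add_mem hg hh

theorem iterate_derivation_mem_pow {A R : Type*} [CommSemiring A] [CommSemiring R] [Algebra A R]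
    (D : Derivation A R R) {I : Ideal R} {n k : ℕ} {f : R} (hf : f ∈ I ^ (n + k)) :
    D^[k] f ∈ I ^ n := by
  induction k generalizing f with
  | zero => exact hf
  | succ k ih => exact ih (derivation_mem_pow D hf)

theorem sum_mul_pow_mul_prod_erase_eq {ι R : Type*} [DecidableEq ι] [CommRing R]
    {s : Finset ι} {c a b : ι → R} {m : ℕ}
    (hc : ∀ k < m, ∑ i ∈ s, c i * (b i ^ k * (b i - a i) ^ (m - 1 - k)) = 0) :
    ∑ i ∈ s, c i * b i ^ m * ∏ j ∈ s.erase i, a j =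
      ∑ i ∈ s, c i * (b i - a i) ^ m * ∏ j ∈ s.erase i, a j := by
  have factor : ∀ i ∈ s, c i * b i ^ m * ∏ j ∈ s.erase i, a j -
        c i * (b i - a i) ^ m * ∏ j ∈ s.erase i, a j =
      (∏ j ∈ s, a j) * ∑ k ∈ Finset.range m, c i * (b i ^ k * (b i - a i) ^ (m - 1 - k)) := by
    intro i hi
    have geom := geom_sum₂_mul (b i) (b i - a i) m
    rw [sub_sub_cancel] at geom
    rw [← Finset.mul_prod_erase s a hi, ← Finset.mul_sum]
    linear_combination -c i * (∏ j ∈ s.erase i, a j) * geom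
  rw [← sub_eq_zero, ← Finset.sum_sub_distrib, Finset.sum_congr rfl factor, ← Finset.mul_sum,
    Finset.sum_comm, Finset.sum_eq_zero fun k hk => hc k (Finset.mem_range.1 hk), mul_zero]

section Icosahedron

open scoped Matrix

theorem dotProduct_mem {ι R : Type*} [Fintype ι] [Semiring R] {I : Ideal R} (v : ι → R) {w : ι → R}
    (hw : ∀ i, w i ∈ I) : v ⬝ᵥ w ∈ I :=
  I.sum_mem fun i _ => I.mul_mem_left (v i) (hw i)

variable {R : Type*} [CommRing R]

theorem crossProduct_mem {I : Ideal R} (v : Fin 3 → R) {w : Fin 3 → R} (hw : ∀ i, w i ∈ I)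
    (i : Fin 3) : (v ⨯₃ w) i ∈ I := by
  have minor_mem (j k : Fin 3) : v j * w k - v k * w j ∈ I :=
    sub_mem (I.mul_mem_left _ (hw k)) (I.mul_mem_left _ (hw j))
  rw [cross_apply]
  fin_cases i <;> exact minor_mem _ _

/-- The coefficient vectors of `L₁, …, L₆`. When `u ^ 2 = u + 1` they span the six axes through
opposite vertices of an icosahedron. -/
def icosahedralAxis (u : R) : Fin 6 → Fin 3 → R :=
  ![![0, 1, -(u - 1)], ![0, 1, u - 1], ![1, 0, -u], ![1, 0, u], ![1, -(u - 1), 0], ![1, u - 1, 0]]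

/-- Weights compensating for the different lengths of the vectors `icosahedralAxis u i`: those
of index `2` and `3` are `u` times as long as the others, and `u ^ 4 * (3 - u) = 4 * u + 3`. -/
def icosahedralWeight (u : R) : Fin 6 → R :=
  ![4 * u + 3, 4 * u + 3, 3 - u, 3 - u, 4 * u + 3, 4 * u + 3]

/-- Twice the form `F_{Z(H₃)}` at the points `P = (a, b, c)` and `Q = (x, y, z)`, written
symmetrically in the six axes. -/
def icosahedralSextic (u : R) (P Q : Fin 3 → R) : R :=
  ∑ i, icosahedralWeight u i * (icosahedralAxis u i ⬝ᵥ Q ⨯₃ P) * (icosahedralAxis u i ⬝ᵥ P) ^ 4 *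
    ∏ j ∈ Finset.univ.erase i, icosahedralAxis u j ⬝ᵥ Q

theorem icosahedral_fourth_moment {u : R} (hu : u ^ 2 = u + 1) (v₁ v₂ v₃ v₄ : Fin 3 → R) :
    ∑ i, icosahedralWeight u i * ((icosahedralAxis u i ⬝ᵥ v₁) * (icosahedralAxis u i ⬝ᵥ v₂) *
        (icosahedralAxis u i ⬝ᵥ v₃) * (icosahedralAxis u i ⬝ᵥ v₄)) =
      (2 * u + 4) * ((v₁ ⬝ᵥ v₂) * (v₃ ⬝ᵥ v₄) + (v₁ ⬝ᵥ v₃) * (v₂ ⬝ᵥ v₄) +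
        (v₁ ⬝ᵥ v₄) * (v₂ ⬝ᵥ v₃)) := by
  simp only [Fin.sum_univ_six, icosahedralAxis, icosahedralWeight, Matrix.vec3_dotProduct,
    Matrix.cons_val]
  grind

theorem icosahedral_mixed_moment_eq_zero {u : R} (hu : u ^ 2 = u + 1) {n v w : Fin 3 → R}
    (hv : n ⬝ᵥ v = 0) (hw : n ⬝ᵥ w = 0) {k : ℕ} (hk : k < 4) :
    ∑ i, icosahedralWeight u i * (icosahedralAxis u i ⬝ᵥ n) *
      ((icosahedralAxis u i ⬝ᵥ v) ^ k * (icosahedralAxis u i ⬝ᵥ w) ^ (3 - k)) = 0 := by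
  have vanish {v₁ v₂ v₃ : Fin 3 → R} (h₁ : n ⬝ᵥ v₁ = 0) (h₂ : n ⬝ᵥ v₂ = 0) (h₃ : n ⬝ᵥ v₃ = 0) :
      ∑ i, icosahedralWeight u i * ((icosahedralAxis u i ⬝ᵥ n) * (icosahedralAxis u i ⬝ᵥ v₁) *
        (icosahedralAxis u i ⬝ᵥ v₂) * (icosahedralAxis u i ⬝ᵥ v₃)) = 0 := by
    simp [icosahedral_fourth_moment hu, h₁, h₂, h₃]
  interval_cases k
  · convert vanish hw hw hw using 2; ring
  · convert vanish hv hw hw using 2; ring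
  · convert vanish hv hv hw using 2; ring
  · convert vanish hv hv hv using 2; ring

theorem icosahedralSextic_eq_sum_sub_pow {u : R} (hu : u ^ 2 = u + 1) (P Q : Fin 3 → R) :
    icosahedralSextic u P Q =
      ∑ i, icosahedralWeight u i * (icosahedralAxis u i ⬝ᵥ Q ⨯₃ P) *
        (icosahedralAxis u i ⬝ᵥ (P - Q)) ^ 4 *
        ∏ j ∈ Finset.univ.erase i, icosahedralAxis u j ⬝ᵥ Q := by
  have hP : Q ⨯₃ P ⬝ᵥ P = 0 := by rw [dotProduct_comm, dot_cross_self]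
  have hQ : Q ⨯₃ P ⬝ᵥ Q = 0 := by rw [dotProduct_comm, dot_self_cross]
  have hPQ : Q ⨯₃ P ⬝ᵥ (P - Q) = 0 := by rw [dotProduct_sub, hP, hQ, sub_zero]
  simp only [icosahedralSextic, dotProduct_sub]
  refine sum_mul_pow_mul_prod_erase_eq fun k hk => ?_
  simpa only [dotProduct_sub] using icosahedral_mixed_moment_eq_zero hu hP hPQ hk

theorem icosahedralSextic_mem_pow_five {u : R} (hu : u ^ 2 = u + 1) {I : Ideal R}
    {P Q : Fin 3 → R} (hPQ : ∀ i, P i - Q i ∈ I) : icosahedralSextic u P Q ∈ I ^ 5 := by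
  have cross_mem : ∀ i, (Q ⨯₃ P) i ∈ I := by
    have cross_sub : Q ⨯₃ P = Q ⨯₃ (P - Q) := by rw [map_sub, cross_self, sub_zero]
    rw [cross_sub]
    exact crossProduct_mem Q hPQ
  rw [icosahedralSextic_eq_sum_sub_pow hu]
  refine sum_mem fun i _ => Ideal.mul_mem_right _ _ ?_
  rw [pow_succ' I]
  exact Ideal.mul_mem_mul (I.mul_mem_left _ (dotProduct_mem _ cross_mem))
    (Ideal.pow_mem_pow (dotProduct_mem _ hPQ) 4)

theorem map_icosahedralAxis {S : Type*} [CommRing S] (φ : R →+* S) (u : R) (i : Fin 6) :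
    φ ∘ icosahedralAxis u i = icosahedralAxis (φ u) i := by
  ext k
  fin_cases i <;> fin_cases k <;> simp [icosahedralAxis]

theorem map_icosahedralWeight {S : Type*} [CommRing S] (φ : R →+* S) (u : R) (i : Fin 6) :
    φ (icosahedralWeight u i) = icosahedralWeight (φ u) i := by
  fin_cases i <;> simp [icosahedralWeight, map_ofNat]

theorem map_crossProduct {S : Type*} [CommRing S] (φ : R →+* S) (v w : Fin 3 → R) :
    φ ∘ (v ⨯₃ w) = (φ ∘ v) ⨯₃ (φ ∘ w) := by
  ext k
  fin_cases k <;> simp [cross_apply]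

theorem map_icosahedralSextic {S : Type*} [CommRing S] (φ : R →+* S) (u : R) (P Q : Fin 3 → R) :
    φ (icosahedralSextic u P Q) = icosahedralSextic (φ u) (φ ∘ P) (φ ∘ Q) := by
  simp only [icosahedralSextic, map_sum, map_mul, map_pow, map_prod, RingHom.map_dotProduct,
    map_icosahedralAxis, map_icosahedralWeight, map_crossProduct]

theorem icosahedralSextic_apply_eq_ten {u : R} (hu : u ^ 2 = u + 1) :
    icosahedralSextic u ![0, 0, 1] ![1, 1, 0] = 10 := by
  simp only [icosahedralSextic, ← Finset.filter_ne', Finset.prod_filter, Fin.sum_univ_six,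
    Fin.prod_univ_six, ne_eq, Fin.reduceEq, not_true, not_false_eq_true, if_true, if_false,
    icosahedralAxis, icosahedralWeight, cross_apply, Matrix.vec3_dotProduct, Matrix.cons_val]
  grind

/-- The coefficient vectors of the Galois-conjugate lines `M₁, …, M₆`. -/
def icosahedralConjugate (u : R) : Fin 6 → Fin 3 → R :=
  ![![0, 1, u], ![0, 1, -u], ![1, 0, -(1 - u)], ![1, 0, 1 - u], ![1, u, 0], ![1, -u, 0]]

/-- The coordinate paired with `Mᵢ` in `F_{Z(H₃)}`: the one that `Lᵢ` and `Mᵢ` do not involve. -/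
def omittedCoordinate : Fin 6 → Fin 3 :=
  ![0, 0, 1, 1, 2, 2]

/-- The scalar multiplying `fᵢ * (Mᵢ * q₂ᵢ₋₁ - A * q₂ᵢ)` in `2 * F_{Z(H₃)}`, where `A` is the
coordinate `omittedCoordinate i`. -/
def conjugateCoefficient (u : R) : Fin 6 → R :=
  ![3 * u + 1, -(3 * u + 1), 1 - 2 * u, -(1 - 2 * u), 3 * u + 1, -(3 * u + 1)]

theorem conjugateCoefficient_mul_bracket {u : R} (hu : u ^ 2 = u + 1) (P Q : Fin 3 → R)
    (i : Fin 6) :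
    conjugateCoefficient u i *
        ((icosahedralConjugate u i ⬝ᵥ Q) * P (omittedCoordinate i) -
          Q (omittedCoordinate i) * (icosahedralConjugate u i ⬝ᵥ P)) =
      icosahedralWeight u i * (icosahedralAxis u i ⬝ᵥ Q ⨯₃ P) := by
  simp only [Matrix.vec3_dotProduct, cross_apply]
  fin_cases i <;>
    simp only [conjugateCoefficient, icosahedralConjugate, omittedCoordinate, icosahedralWeight,
      icosahedralAxis, Fin.zero_eta, Fin.mk_one, Fin.reduceFinMk, Matrix.cons_val] <;>
    grind

end Icosahedron

section H3

open scoped Matrix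

theorem H3L_eq_dotProduct (u : ℂ) (i : Fin 6) :
    H3L u i = icosahedralAxis (C (C u)) i ⬝ᵥ X := by
  rw [Matrix.vec3_dotProduct]
  fin_cases i <;>
    simp only [H3L, icosahedralAxis, Fin.zero_eta, Fin.mk_one, Fin.reduceFinMk, Matrix.cons_val,
      map_sub, map_one] <;>
    ring

theorem H3F_eq_sum_brackets (u : ℂ) :
    H3F u = C (C (1 / 2)) * ∑ i, conjugateCoefficient (C (C u)) i *
      ((icosahedralConjugate (C (C u)) i ⬝ᵥ X) * C (X (omittedCoordinate i)) -
        X (omittedCoordinate i) * (icosahedralConjugate (C (C u)) i ⬝ᵥ fun k => C (X k))) *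
      (icosahedralAxis (C (C u)) i ⬝ᵥ fun k => C (X k)) ^ 4 * H3f u i := by
  have h2 : (C (C 2) : Sxyz) = 2 := map_ofNat ((C : Qabc →+* Sxyz).comp C) 2
  have h3 : (C (C 3) : Sxyz) = 3 := map_ofNat ((C : Qabc →+* Sxyz).comp C) 3
  simp only [H3F, H3M, H3q, Fin.sum_univ_six, Matrix.vec3_dotProduct, icosahedralAxis,
    icosahedralConjugate, omittedCoordinate, conjugateCoefficient, Matrix.cons_val, map_add,
    map_sub, map_mul, map_pow, map_one, h2, h3]
  ring

theorem C_C_sq_eq_add_one {u : ℂ} (hu : u ^ 2 = u + 1) : (C (C u) : Sxyz) ^ 2 = C (C u) + 1 := by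
  simp [← map_pow, hu]

theorem H3F_eq_icosahedralSextic {u : ℂ} (hu : u ^ 2 = u + 1) :
    H3F u = C (C (1 / 2)) * icosahedralSextic (C (C u)) (fun k => C (X k)) X := by
  have bracket := conjugateCoefficient_mul_bracket (C_C_sq_eq_add_one hu) (fun k => C (X k)) X
  simp only [H3F_eq_sum_brackets, bracket, H3f, H3L_eq_dotProduct, icosahedralSextic]

theorem eval_eval_H3F_eq_five {u : ℂ} (hu : u ^ 2 = u + 1) :
    eval ![0, 0, 1] (eval (C ∘ ![1, 1, 0]) (H3F u)) = 5 := by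
  have hP : (eval ![0, 0, 1]) ∘ (eval (C ∘ ![1, 1, 0])) ∘ (fun k => C (X k) : Fin 3 → Sxyz) =
      (![0, 0, 1] : Fin 3 → ℂ) := by
    ext k; simp
  have hQ : (eval ![0, 0, 1]) ∘ (eval (C ∘ ![1, 1, 0])) ∘ (X : Fin 3 → Sxyz) =
      (![1, 1, 0] : Fin 3 → ℂ) := by
    ext k; simp
  rw [H3F_eq_icosahedralSextic hu]
  simp only [map_mul, map_icosahedralSextic, hP, hQ, eval_C, icosahedralSextic_apply_eq_ten hu]
  norm_num

theorem H3F_mem_pow_five {u : ℂ} (hu : u ^ 2 = u + 1) :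
    H3F u ∈ RingHom.ker (eval (X : Fin 3 → Qabc)) ^ 5 := by
  rw [H3F_eq_icosahedralSextic hu]
  refine Ideal.mul_mem_left _ _ (icosahedralSextic_mem_pow_five (C_C_sq_eq_add_one hu) fun k => ?_)
  simp [RingHom.mem_ker]

end H3

/-- `F_{Z(H₃)}` is nonzero and has multiplicity at least 5 at the general point: every
partial derivative of order at most 4 in `x,y,z`, evaluated at `(x,y,z) = (a,b,c)`, is the
zero polynomial in `ℂ[a,b,c]`. -/
theorem H3F_ne_zero_and_multiplicity_five (u : ℂ) (hu : u ^ 2 = u + 1) :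
    H3F u ≠ 0 ∧
    ∀ α₁ α₂ α₃ : ℕ, α₁ + α₂ + α₃ ≤ 4 →
      MvPolynomial.eval (fun i => (X i : Qabc))
        ((⇑(pderiv (0 : Fin 3)))^[α₁] ((⇑(pderiv (1 : Fin 3)))^[α₂]
          ((⇑(pderiv (2 : Fin 3)))^[α₃] (H3F u)))) = 0 := by
  refine ⟨fun hF => ?_, fun α₁ α₂ α₃ hα => ?_⟩
  · simpa [hF] using eval_eval_H3F_eq_five hu
  · have h₀ := Ideal.pow_le_pow_right (show 1 + α₁ + α₂ + α₃ ≤ 5 by lia) (H3F_mem_pow_five hu)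
    have h₃ := iterate_derivation_mem_pow (pderiv 2) h₀
    have h₂ := iterate_derivation_mem_pow (pderiv 1) h₃
    have h₁ := iterate_derivation_mem_pow (pderiv 0) h₂
    rwa [pow_one] at h₁
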